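/- (Takagi) Let λ₁,…,λ_N be distinct points of 𝔻 and w₁,…,w_N ∈ ℂ, and suppose the Pick matrix with (i,j) entry (1 − w_i w̄_j)/(1 − λ_i λ̄_j) is invertible (in particular Hermitian) with π positive eigenvalues and ν negative eigenvalues. Then there exist a Blaschke product f of degree π and a Blaschke product g of degree ν such that g(λ_i) ≠ 0 and f(λ_i)/g(λ_i) = w_i for every i = 1,…,N; in particular the meromorphic function φ = f/g interpolates the data and has modulus one everywhere on the unit circle where it is defined. -/

import Mathlib

open Metric Matrix Finset

/-- A Blaschke product of degree `n`: `B(z) = c ∏_{k=1}^n (z - aₖ)/(1 - āₖ z)` with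
`|c| = 1` and zeros `aₖ` (for degree `0` this is the unimodular constant `c`). -/
noncomputable def blaschkeProd {n : ℕ} (c : ℂ) (a : Fin n → ℂ) (z : ℂ) : ℂ :=
  c * ∏ k, (z - a k) / (1 - starRingEnd ℂ (a k) * z)

/-!
Let `N` be the number of nodes, `D = ∏ᵢ (z - λᵢ)` and `p^#(z) = zᴺ conj (p (1 / conj z))`. Consider
the pairs `(p, q)` of polynomials of degree at most `N` such that `φ = p / q` satisfies `φ(λᵢ) = wᵢ`
and `φ(1 / conj λᵢ) = 1 / conj wᵢ`. For such pairs the polynomials `p p^# - q q^#` and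
`p₁ q₂ - p₂ q₁` have degree at most `2N` and vanish at all the `λᵢ` and `1 / conj λᵢ`, so they are
multiples of `D D^#`.

Invertibility of the Pick matrix yields pairs with prescribed values at `1`. If `|p(1)| = |q(1)|`
then `p p^# = q q^#`, and cancelling common factors turns `φ` into a quotient `f / g` of Blaschke
products with `deg f + deg g ≤ N`. For the pairs with values `(1, 0)` and `(0, 1)` at `1`, the
polynomial `p₁ q₂ - p₂ q₁` is a nonzero multiple of `D D^#` and so has simple zeros at the nodes;
hence `q₁` and `q₂` do not vanish together at a node, and `u q₁ + q₂` vanishes at no node for all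
but finitely many unimodular `u`.

The Pick kernel of a Blaschke product of degree `n` is a sum of `n` positive kernels of rank one, so
the Pick matrix is a difference of positive semidefinite matrices of ranks at most `deg f` and
`deg g`. Therefore `π ≤ deg f` and `ν ≤ deg g`, and `π + ν = N` forces equality.
-/

open Polynomial Lagrange ComplexConjugate

/-! ### The conjugate reciprocal of a polynomial -/

section ConjReflect

variable {R : Type*} [CommRing R] [StarRing R]

/-- The conjugate reciprocal `p^#(z) = zⁿ conj (p (1 / conj z))` of a polynomial `p`, relative to
the degree bound `n`. It is meaningful only for `p.natDegree ≤ n`, since `Polynomial.reflect n`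
leaves the coefficients beyond `n` in place. -/
noncomputable def conjReflect (n : ℕ) : R[X] →ₛₗ[starRingEnd R] R[X] where
  toFun p := (p.map (starRingEnd R)).reflect n
  map_add' p q := by rw [Polynomial.map_add, reflect_add]
  map_smul' c p := by
    rw [smul_eq_C_mul, Polynomial.map_mul, map_C, reflect_C_mul, smul_eq_C_mul]

lemma conjReflect_apply (n : ℕ) (p : R[X]) :
    conjReflect n p = (p.map (starRingEnd R)).reflect n := rfl

lemma conjReflect_involutive (n : ℕ) :
    Function.Involutive (conjReflect n : R[X] → R[X]) := fun p => by
  ext k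
  simp [conjReflect_apply, coeff_reflect]

lemma conjReflect_ne_zero {n : ℕ} {p : R[X]} (hp : p ≠ 0) : conjReflect n p ≠ 0 :=
  (map_ne_zero_iff _ (conjReflect_involutive n).injective).2 hp

lemma natDegree_conjReflect_le {n : ℕ} {p : R[X]} (hp : p.natDegree ≤ n) :
    (conjReflect n p).natDegree ≤ n :=
  natDegree_reflect_le.trans (max_le le_rfl (natDegree_map_le.trans hp))

lemma conjReflect_mul {m n : ℕ} {p q : R[X]} (hp : p.natDegree ≤ m) (hq : q.natDegree ≤ n) :
    conjReflect (m + n) (p * q) = conjReflect m p * conjReflect n q := by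
  simp only [conjReflect_apply, Polynomial.map_mul]
  exact reflect_mul _ _ (natDegree_map_le.trans hp) (natDegree_map_le.trans hq)

lemma conjReflect_zero_one : conjReflect 0 (1 : R[X]) = 1 := by
  simp [conjReflect_apply, reflect_one]

lemma conjReflect_one_X_sub_C (r : R) : conjReflect 1 (X - C r) = 1 - C (conj r) * X := by
  simp [conjReflect_apply, reflect_sub, reflect_C]

lemma conjReflect_nodal {ι : Type*} (s : Finset ι) (v : ι → R) :
    conjReflect #s (nodal s v) = ∏ i ∈ s, (1 - C (conj (v i)) * X) := by
  nontriviality R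
  classical
  induction s using Finset.induction_on with
  | empty => simp [conjReflect_zero_one]
  | insert i s hi ih =>
    rw [card_insert_of_notMem hi, add_comm, nodal_insert_eq_nodal hi, prod_insert hi,
      conjReflect_mul (natDegree_X_sub_C_le _) natDegree_nodal.le, conjReflect_one_X_sub_C, ih]

lemma eval_conjReflect_nodal {ι : Type*} (s : Finset ι) (v : ι → R) (z : R) :
    (conjReflect #s (nodal s v)).eval z = ∏ i ∈ s, (1 - conj (v i) * z) := by
  simp [conjReflect_nodal, eval_prod]

end ConjReflect

lemma eval_conjReflect {K : Type*} [Field K] [StarRing K] {n : ℕ} {p : K[X]}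
    (hp : p.natDegree ≤ n) {z : K} (hz : z ≠ 0) :
    (conjReflect n p).eval z = z ^ n * conj (p.eval (conj z)⁻¹) := by
  let _ : Invertible z⁻¹ := invertibleOfNonzero (inv_ne_zero hz)
  have h := eval₂_reflect_mul_pow (RingHom.id K) z⁻¹ n (p.map (starRingEnd K))
    (natDegree_map_le.trans hp)
  have hmap : (p.map (starRingEnd K)).eval z⁻¹ = conj (p.eval (conj z)⁻¹) := by
    rw [← eval_map_apply, map_inv₀, starRingEnd_self_apply]
  rw [invOf_eq_inv, inv_inv, eval₂_id, eval₂_id, hmap] at h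
  rw [← h, conjReflect_apply, mul_left_comm, ← mul_pow, mul_inv_cancel₀ hz, one_pow, mul_one]

lemma eval_conjReflect_of_norm_eq_one {n : ℕ} {p : ℂ[X]} (hp : p.natDegree ≤ n) {z : ℂ}
    (hz : ‖z‖ = 1) : (conjReflect n p).eval z = z ^ n * conj (p.eval z) := by
  have hz0 : z ≠ 0 := norm_ne_zero_iff.1 (hz ▸ one_ne_zero)
  rw [eval_conjReflect hp hz0, Complex.inv_def, Complex.conj_conj, Complex.normSq_conj,
    Complex.normSq_eq_norm_sq, hz]
  simp

lemma one_sub_mul_ne_zero {R : Type*} [NormedRing R] [NormOneClass R] {x y : R}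
    (hx : ‖x‖ ≤ 1) (hy : ‖y‖ < 1) : 1 - x * y ≠ 0 := by
  intro h
  have hxy : ‖x * y‖ = 1 := by rw [← sub_eq_zero.1 h, norm_one]
  nlinarith [norm_mul_le x y, norm_nonneg y]

/-! ### Blaschke products -/

/-- `f` is a Blaschke product of degree `n`, with its unimodular constant and its zeros left
implicit. -/
def IsBlaschkeProduct (n : ℕ) (f : ℂ → ℂ) : Prop :=
  ∃ (c : ℂ) (a : Fin n → ℂ), ‖c‖ = 1 ∧ (∀ k, a k ∈ ball (0 : ℂ) 1) ∧ f = blaschkeProd c a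

lemma IsBlaschkeProduct.const_mul {n : ℕ} {f : ℂ → ℂ} (hf : IsBlaschkeProduct n f) {u : ℂ}
    (hu : ‖u‖ = 1) : IsBlaschkeProduct n fun z => u * f z := by
  obtain ⟨c, a, hc, ha, rfl⟩ := hf
  exact ⟨u * c, a, by rw [norm_mul, hu, hc, one_mul], ha,
    funext fun z => (mul_assoc _ _ _).symm⟩

lemma norm_sub_eq_norm_one_sub_conj_mul {z : ℂ} (hz : ‖z‖ = 1) (a : ℂ) :
    ‖z - a‖ = ‖1 - conj a * z‖ := by
  have hzz : z * conj z = 1 := by rw [Complex.mul_conj', hz]; simp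
  have h : 1 - conj a * z = z * conj (z - a) := by
    rw [map_sub]
    linear_combination -hzz
  rw [h, norm_mul, hz, one_mul, Complex.norm_conj]

lemma IsBlaschkeProduct.norm_eq_one {n : ℕ} {f : ℂ → ℂ} (hf : IsBlaschkeProduct n f) {z : ℂ}
    (hz : ‖z‖ = 1) : ‖f z‖ = 1 := by
  obtain ⟨c, a, hc, ha, rfl⟩ := hf
  rw [blaschkeProd, norm_mul, hc, one_mul, norm_prod]
  refine prod_eq_one fun k _ => ?_
  have hden : 1 - z * conj (a k) ≠ 0 :=
    one_sub_mul_ne_zero hz.le (by rw [Complex.norm_conj]; exact mem_ball_zero_iff.1 (ha k))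
  rw [norm_div, norm_sub_eq_norm_one_sub_conj_mul hz, mul_comm, div_self (norm_ne_zero_iff.2 hden)]

lemma exists_eq_smul_nodal {K : Type*} [Field K] [IsAlgClosed K] {n : ℕ} (p : K[X])
    (hn : p.natDegree = n) : ∃ a : Fin n → K, p = p.leadingCoeff • nodal univ a := by
  classical
  have hsplits := IsAlgClosed.splits p
  let e := Fintype.equivFinOfCardEq
    ((Multiset.card_coe p.roots).trans (hsplits.natDegree_eq_card_roots.symm.trans hn))
  refine ⟨fun k => (e.symm k).1, ?_⟩
  rw [nodal_eq, e.symm.prod_comp fun r => X - C r.1, smul_eq_C_mul]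
  conv_lhs => rw [hsplits.eq_prod_roots, ← Multiset.map_univ p.roots]
  rfl

lemma isBlaschkeProduct_eval_div_eval_conjReflect {n : ℕ} {p : ℂ[X]} (hp : p ≠ 0)
    (hn : p.natDegree = n) (hroots : ∀ z, p.eval z = 0 → z ∈ ball (0 : ℂ) 1) :
    IsBlaschkeProduct n fun z => p.eval z / (conjReflect n p).eval z := by
  obtain ⟨a, ha⟩ := exists_eq_smul_nodal p hn
  set c := p.leadingCoeff
  have hc0 : c ≠ 0 := leadingCoeff_ne_zero.2 hp
  refine ⟨c / conj c, a, ?_, fun k => hroots _ ?_, funext fun z => ?_⟩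
  · rw [norm_div, Complex.norm_conj, div_self (norm_ne_zero_iff.2 hc0)]
  · rw [ha, eval_smul, eval_nodal_at_node (mem_univ k), smul_zero]
  · have hden := eval_conjReflect_nodal univ a z
    rw [card_fin] at hden
    rw [ha, map_smulₛₗ, eval_smul, eval_smul, hden, eval_nodal, blaschkeProd, prod_div_distrib,
      smul_eq_mul, smul_eq_mul, mul_div_mul_comm]

lemma exists_eq_mul_split_roots {K : Type*} [Field K] [IsAlgClosed K] (P : K → Prop) {p : K[X]}
    (hp : p ≠ 0) : ∃ a b : K[X], p = a * b ∧ (∀ z, a.eval z = 0 → P z) ∧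
      ∀ z, b.eval z = 0 → ¬ P z := by
  classical
  refine ⟨((p.roots.filter P).map (X - C ·)).prod,
    C p.leadingCoeff * ((p.roots.filter (¬ P ·)).map (X - C ·)).prod, ?_, fun z hz => ?_,
    fun z hz => ?_⟩
  · rw [mul_left_comm, ← Multiset.prod_add, ← Multiset.map_add, Multiset.filter_add_not]
    exact (IsAlgClosed.splits p).eq_prod_roots
  · simp_all [eval_multiset_prod, Multiset.prod_eq_zero_iff, sub_eq_zero]
  · simp_all [eval_multiset_prod, Multiset.prod_eq_zero_iff, sub_eq_zero]

/-! ### Polynomials with `p p^# = q q^#` -/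

lemma natDegree_conjReflect_of_eval_zero_ne_zero {K : Type*} [Field K] [StarRing K] {n : ℕ}
    {p : K[X]} (hp : p.natDegree ≤ n) (h0 : p.eval 0 ≠ 0) : (conjReflect n p).natDegree = n := by
  refine natDegree_eq_of_le_of_coeff_ne_zero (natDegree_conjReflect_le hp) ?_
  simpa [conjReflect_apply, coeff_reflect, coeff_zero_eq_eval_zero] using h0

lemma mem_ball_of_eval_conjReflect_eq_zero {n : ℕ} {p : ℂ[X]} (hp : p.natDegree ≤ n)
    (hroots : ∀ z, p.eval z = 0 → 1 < ‖z‖) {z : ℂ} (hz : (conjReflect n p).eval z = 0) :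
    z ∈ ball (0 : ℂ) 1 := by
  rcases eq_or_ne z 0 with rfl | hz0
  · exact mem_ball_self one_pos
  · rw [eval_conjReflect hp hz0, mul_eq_zero, or_iff_right (pow_ne_zero _ hz0), map_eq_zero] at hz
    have hnorm := hroots _ hz
    rw [norm_inv, Complex.norm_conj, one_lt_inv₀ (norm_pos_iff.2 hz0)] at hnorm
    exact mem_ball_zero_iff.2 hnorm

lemma exists_isBlaschkeProduct_div_eq_div_conjReflect {n : ℕ} {p : ℂ[X]} (hp : p ≠ 0)
    (hn : p.natDegree ≤ n) (hcircle : ∀ z, ‖z‖ = 1 → p.eval z ≠ 0) :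
    ∃ (m l : ℕ) (f g : ℂ → ℂ), m + l = n ∧ IsBlaschkeProduct m f ∧ IsBlaschkeProduct l g ∧
      ∀ z ∈ ball (0 : ℂ) 1, (conjReflect n p).eval z ≠ 0 →
        g z ≠ 0 ∧ f z / g z = p.eval z / (conjReflect n p).eval z := by
  obtain ⟨a, b, rfl, ha, hb⟩ := exists_eq_mul_split_roots (· ∈ ball (0 : ℂ) 1) hp
  have ⟨ha0, hb0⟩ := mul_ne_zero_iff.1 hp
  have hdeg := natDegree_mul ha0 hb0
  obtain ⟨l, rfl⟩ := Nat.exists_eq_add_of_le ((Nat.le_add_right _ _).trans (hdeg.symm.trans_le hn))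
  have hbl : b.natDegree ≤ l := by lia
  have hb1 : ∀ z, b.eval z = 0 → 1 < ‖z‖ := fun z hz =>
    lt_of_le_of_ne (by simpa using hb z hz) fun h => hcircle z h.symm (by simp [hz])
  have hb_zero : b.eval 0 ≠ 0 := fun h => hb 0 h (mem_ball_self one_pos)
  have hg := isBlaschkeProduct_eval_div_eval_conjReflect (conjReflect_ne_zero hb0)
    (natDegree_conjReflect_of_eval_zero_ne_zero hbl hb_zero)
    fun _ => mem_ball_of_eval_conjReflect_eq_zero hbl hb1
  simp only [conjReflect_involutive l b] at hg
  refine ⟨_, l, _, _, rfl, isBlaschkeProduct_eval_div_eval_conjReflect ha0 rfl ha, hg,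
    fun z hz h => ?_⟩
  have hbz : b.eval z ≠ 0 := fun h => hb z h hz
  rw [conjReflect_mul le_rfl hbl, eval_mul] at h ⊢
  exact ⟨div_ne_zero (mul_ne_zero_iff.1 h).2 hbz, by rw [div_div_div_eq, eval_mul]⟩

lemma exists_eq_smul_conjReflect_of_isCoprime {K : Type*} [Field K] [StarRing K] {n : ℕ}
    {p q : K[X]} (hp : p ≠ 0) (hq : q ≠ 0) (hpq : IsCoprime p q)
    (hn : max p.natDegree q.natDegree = n) (h : p * conjReflect n p = q * conjReflect n q) :
    ∃ c : K, c * conj c = 1 ∧ q = c • conjReflect n p := by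
  obtain ⟨r, hqr⟩ : p ∣ conjReflect n q := hpq.dvd_of_dvd_mul_left ⟨_, h.symm⟩
  have hpr : conjReflect n p = q * r := mul_left_cancel₀ hp (by rw [h, hqr, mul_left_comm])
  have hr : r ≠ 0 := right_ne_zero_of_mul (hpr ▸ conjReflect_ne_zero hp)
  have hr_deg : r.natDegree = 0 := by
    have h₁ := natDegree_conjReflect_le ((le_max_left _ _).trans_eq hn)
    have h₂ := natDegree_conjReflect_le ((le_max_right _ _).trans_eq hn)
    rw [hpr, natDegree_mul hq hr] at h₁
    rw [hqr, natDegree_mul hp hr] at h₂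
    lia
  obtain ⟨c, rfl⟩ := natDegree_eq_zero.1 hr_deg
  have hq_eq : q = conj c • conjReflect n p := by
    rw [← map_smulₛₗ, smul_eq_C_mul, mul_comm, ← hqr, conjReflect_involutive]
  refine ⟨conj c, ?_, hq_eq⟩
  have hsmul : (conj c * c) • conjReflect n p = (1 : K) • conjReflect n p := by
    rw [mul_comm, mul_smul, ← hq_eq, one_smul, hpr, smul_eq_C_mul, mul_comm]
  rw [starRingEnd_self_apply]
  exact smul_left_injective K (conjReflect_ne_zero hp) hsmul

lemma eval_ne_zero_of_isCoprime_of_eq_smul_conjReflect {n : ℕ} {p q : ℂ[X]} {c : ℂ}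
    (hpq : IsCoprime p q) (hp : p.natDegree ≤ n) (hq : q = c • conjReflect n p) {z : ℂ}
    (hz : ‖z‖ = 1) : p.eval z ≠ 0 := by
  intro hpz
  obtain ⟨a, b, hab⟩ := hpq
  have hqz : q.eval z = 0 := by
    rw [hq, eval_smul, eval_conjReflect_of_norm_eq_one hp hz, hpz, map_zero, mul_zero, smul_zero]
  simpa [hpz, hqz] using congrArg (eval z) hab

lemma exists_isBlaschkeProduct_div_eq_div_of_isCoprime {n : ℕ} {p q : ℂ[X]} (hp : p ≠ 0)
    (hq : q ≠ 0) (hpq : IsCoprime p q) (hn : max p.natDegree q.natDegree = n)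
    (h : p * conjReflect n p = q * conjReflect n q) :
    ∃ (m l : ℕ) (f g : ℂ → ℂ), m + l = n ∧ IsBlaschkeProduct m f ∧ IsBlaschkeProduct l g ∧
      ∀ z ∈ ball (0 : ℂ) 1, q.eval z ≠ 0 → g z ≠ 0 ∧ f z / g z = p.eval z / q.eval z := by
  obtain ⟨c, hc, rfl⟩ := exists_eq_smul_conjReflect_of_isCoprime hp hq hpq hn h
  have hpn := (le_max_left _ _).trans_eq hn
  obtain ⟨m, l, f, g, hml, hf, hg, hfg⟩ := exists_isBlaschkeProduct_div_eq_div_conjReflect hp hpn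
    fun z hz => eval_ne_zero_of_isCoprime_of_eq_smul_conjReflect hpq hpn rfl hz
  have hc1 : ‖c‖ = 1 := by
    rw [← sq_eq_sq₀ (norm_nonneg c) zero_le_one, one_pow]
    exact_mod_cast (Complex.mul_conj' c).symm.trans hc
  refine ⟨m, l, f, _, hml, hf, hg.const_mul hc1, fun z hz h => ?_⟩
  rw [eval_smul, smul_eq_mul] at h ⊢
  have ⟨hc0, hz0⟩ := mul_ne_zero_iff.1 h
  obtain ⟨hgz, hfgz⟩ := hfg z hz hz0
  exact ⟨mul_ne_zero hc0 hgz, by rw [div_mul_eq_div_div_swap, hfgz, div_mul_eq_div_div_swap]⟩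

lemma exists_isBlaschkeProduct_div_eq_div {n : ℕ} {p q : ℂ[X]} (hp : p ≠ 0) (hq : q ≠ 0)
    (hpn : p.natDegree ≤ n) (hqn : q.natDegree ≤ n)
    (h : p * conjReflect n p = q * conjReflect n q) :
    ∃ (m l : ℕ) (f g : ℂ → ℂ), m + l ≤ n ∧ IsBlaschkeProduct m f ∧ IsBlaschkeProduct l g ∧
      ∀ z ∈ ball (0 : ℂ) 1, q.eval z ≠ 0 → g z ≠ 0 ∧ f z / g z = p.eval z / q.eval z := by
  obtain ⟨p', q', hdp, hdq, hunit⟩ := extract_gcd p q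
  have hpq := (gcd_isUnit_iff p' q').1 hunit
  generalize gcd p q = d at hdp hdq
  subst hdp hdq
  have hd := left_ne_zero_of_mul hp
  have hp' := right_ne_zero_of_mul hp
  have hq' := right_ne_zero_of_mul hq
  have hdp_deg := natDegree_mul hd hp'
  have hdq_deg := natDegree_mul hd hq'
  obtain ⟨r, rfl⟩ : ∃ r, n = r + max p'.natDegree q'.natDegree :=
    ⟨n - max p'.natDegree q'.natDegree, by lia⟩
  have hdr : d.natDegree ≤ r := by
    rcases max_choice p'.natDegree q'.natDegree with hmax | hmax <;> rw [hmax] at * <;> lia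
  rw [conjReflect_mul hdr (le_max_left _ _), conjReflect_mul hdr (le_max_right _ _),
    mul_mul_mul_comm, mul_mul_mul_comm d q'] at h
  obtain ⟨m, l, f, g, hml, hf, hg, hfg⟩ := exists_isBlaschkeProduct_div_eq_div_of_isCoprime hp' hq'
    hpq rfl (mul_left_cancel₀ (mul_ne_zero hd (conjReflect_ne_zero hd)) h)
  refine ⟨m, l, f, g, by lia, hf, hg, fun z hz hqz => ?_⟩
  rw [eval_mul] at hqz ⊢
  have ⟨hdz, hqz'⟩ := mul_ne_zero_iff.1 hqz
  rw [eval_mul, mul_div_mul_left _ _ hdz]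
  exact hfg z hz hqz'

/-! ### Interpolation at the nodes and at their reflections -/

lemma nodal_dvd_of_eval_eq_zero {K : Type*} [Field K] {κ : Type*} {s : Finset κ} {v : κ → K}
    (hv : Set.InjOn v s) {p : K[X]} (hp : ∀ i ∈ s, p.eval (v i) = 0) : nodal s v ∣ p :=
  prod_dvd_of_coprime (fun _ hi _ hj hij => isCoprime_X_sub_C_of_isUnit_sub
    (sub_ne_zero.2 fun h => hij (hv hi hj h)).isUnit) fun i hi => dvd_iff_isRoot.2 (hp i hi)

/-- The Pick matrix of the interpolation data `lam i ↦ w i`. -/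
noncomputable def pickMatrix {ι : Type*} (lam w : ι → ℂ) : Matrix ι ι ℂ :=
  of fun i j => (1 - w i * conj (w j)) / (1 - lam i * conj (lam j))

lemma isHermitian_pickMatrix {ι : Type*} (lam w : ι → ℂ) : (pickMatrix lam w).IsHermitian := by
  ext i j
  simp [pickMatrix, mul_comm]

section InterpolationPairs

variable {ι : Type*} [Fintype ι]

/-- The pairs `(p, q)` of polynomials of degree at most the number of nodes for which `φ = p / q`
formally satisfies `φ (lam i) = w i` and the reflected conditions
`φ (1 / conj (lam i)) = 1 / conj (w i)`, with all denominators cleared. -/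
noncomputable def interpolationPairs (lam w : ι → ℂ) : Submodule ℂ (ℂ[X] × ℂ[X]) where
  carrier := {pq | pq.1.natDegree ≤ Fintype.card ι ∧ pq.2.natDegree ≤ Fintype.card ι ∧
    ∀ i, pq.1.eval (lam i) = w i * pq.2.eval (lam i) ∧
      (conjReflect (Fintype.card ι) pq.2).eval (lam i) =
        w i * (conjReflect (Fintype.card ι) pq.1).eval (lam i)}
  zero_mem' := by simp
  add_mem' := by
    rintro a b ⟨ha₁, ha₂, ha⟩ ⟨hb₁, hb₂, hb⟩
    refine ⟨(natDegree_add_le _ _).trans (max_le ha₁ hb₁),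
      (natDegree_add_le _ _).trans (max_le ha₂ hb₂), fun i => ?_⟩
    simp only [Prod.fst_add, Prod.snd_add, map_add, eval_add, mul_add, (ha i).1, (ha i).2,
      (hb i).1, (hb i).2, and_self]
  smul_mem' := by
    rintro c a ⟨ha₁, ha₂, ha⟩
    refine ⟨(natDegree_smul_le _ _).trans ha₁, (natDegree_smul_le _ _).trans ha₂, fun i => ?_⟩
    simp only [Prod.smul_fst, Prod.smul_snd, map_smulₛₗ, eval_smul, (ha i).1, (ha i).2,
      mul_smul_comm, and_self]

variable {lam w : ι → ℂ}

lemma eval_conjReflect_nodal_ne_zero (hlam : ∀ i, lam i ∈ ball (0 : ℂ) 1) {z : ℂ} (hz : ‖z‖ ≤ 1) :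
    (conjReflect (Fintype.card ι) (nodal univ lam)).eval z ≠ 0 := by
  rw [Fintype.card, eval_conjReflect_nodal]
  refine prod_ne_zero_iff.2 fun i _ => ?_
  rw [mul_comm]
  exact one_sub_mul_ne_zero hz (by rw [Complex.norm_conj]; exact mem_ball_zero_iff.1 (hlam i))

lemma exists_eq_smul_nodal_mul_conjReflect_nodal (hlam : ∀ i, lam i ∈ ball (0 : ℂ) 1)
    (hinj : Function.Injective lam) {r : ℂ[X]}
    (hdeg : r.natDegree ≤ Fintype.card ι + Fintype.card ι) (hr : ∀ i, r.eval (lam i) = 0)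
    (hr' : ∀ i, (conjReflect (Fintype.card ι + Fintype.card ι) r).eval (lam i) = 0) :
    ∃ c : ℂ, r = c • (nodal univ lam * conjReflect (Fintype.card ι) (nodal univ lam)) := by
  rcases eq_or_ne r 0 with rfl | hr0
  · exact ⟨0, (zero_smul _ _).symm⟩
  have hD : (nodal univ lam).natDegree = Fintype.card ι := natDegree_nodal
  obtain ⟨s, rfl⟩ : nodal univ lam ∣ r :=
    nodal_dvd_of_eval_eq_zero hinj.injOn fun i _ => hr i
  have ⟨hD0, hs0⟩ := mul_ne_zero_iff.1 hr0
  have hs : s.natDegree ≤ Fintype.card ι := by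
    rw [natDegree_mul hD0 hs0, hD] at hdeg
    lia
  obtain ⟨t, ht⟩ : nodal univ lam ∣ conjReflect (Fintype.card ι) s := by
    refine nodal_dvd_of_eval_eq_zero hinj.injOn fun i _ => ?_
    have hri := hr' i
    rw [conjReflect_mul hD.le hs, eval_mul] at hri
    exact (mul_eq_zero.1 hri).resolve_left
      (eval_conjReflect_nodal_ne_zero hlam (mem_ball_zero_iff.1 (hlam i)).le)
  have ht0 : t ≠ 0 := right_ne_zero_of_mul (ht ▸ conjReflect_ne_zero hs0)
  have ht_deg : t.natDegree = 0 := by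
    have hdeg' := natDegree_conjReflect_le hs
    rw [ht, natDegree_mul hD0 ht0, hD] at hdeg'
    lia
  obtain ⟨c, rfl⟩ := natDegree_eq_zero.1 ht_deg
  refine ⟨conj c, ?_⟩
  rw [mul_comm, ← smul_eq_C_mul] at ht
  rw [← mul_smul_comm, ← map_smulₛₗ, ← ht, conjReflect_involutive]

lemma exists_mul_conjReflect_sub_eq_smul_nodal_mul (hlam : ∀ i, lam i ∈ ball (0 : ℂ) 1)
    (hinj : Function.Injective lam) {pq : ℂ[X] × ℂ[X]} (hpq : pq ∈ interpolationPairs lam w) :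
    ∃ c : ℂ, pq.1 * conjReflect (Fintype.card ι) pq.1 - pq.2 * conjReflect (Fintype.card ι) pq.2 =
      c • (nodal univ lam * conjReflect (Fintype.card ι) (nodal univ lam)) := by
  obtain ⟨hp, hq, h⟩ := hpq
  have hp' := natDegree_conjReflect_le hp
  have hq' := natDegree_conjReflect_le hq
  have heval : ∀ i, (pq.1 * conjReflect (Fintype.card ι) pq.1 -
      pq.2 * conjReflect (Fintype.card ι) pq.2).eval (lam i) = 0 := fun i => by
    rw [eval_sub, eval_mul, eval_mul, (h i).1, (h i).2]
    ring
  refine exists_eq_smul_nodal_mul_conjReflect_nodal hlam hinj ((natDegree_sub_le _ _).trans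
    (max_le (natDegree_mul_le_of_le hp hp') (natDegree_mul_le_of_le hq hq'))) heval fun i => ?_
  rw [map_sub, conjReflect_mul hp hp', conjReflect_mul hq hq', conjReflect_involutive,
    conjReflect_involutive, mul_comm, mul_comm (conjReflect _ _)]
  exact heval i

lemma exists_mul_sub_mul_eq_smul_nodal_mul (hlam : ∀ i, lam i ∈ ball (0 : ℂ) 1)
    (hinj : Function.Injective lam) {pq rs : ℂ[X] × ℂ[X]} (hpq : pq ∈ interpolationPairs lam w)
    (hrs : rs ∈ interpolationPairs lam w) :
    ∃ c : ℂ, pq.1 * rs.2 - rs.1 * pq.2 =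
      c • (nodal univ lam * conjReflect (Fintype.card ι) (nodal univ lam)) := by
  obtain ⟨hp, hq, h⟩ := hpq
  obtain ⟨hr, hs, h'⟩ := hrs
  refine exists_eq_smul_nodal_mul_conjReflect_nodal hlam hinj ((natDegree_sub_le _ _).trans
    (max_le (natDegree_mul_le_of_le hp hs) (natDegree_mul_le_of_le hr hq))) (fun i => ?_)
    fun i => ?_
  · rw [eval_sub, eval_mul, eval_mul, (h i).1, (h' i).1]
    ring
  · rw [map_sub, conjReflect_mul hp hs, conjReflect_mul hr hq, eval_sub, eval_mul, eval_mul,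
      (h i).2, (h' i).2]
    ring

lemma mul_conjReflect_eq_of_norm_eval_one_eq (hlam : ∀ i, lam i ∈ ball (0 : ℂ) 1)
    (hinj : Function.Injective lam) {pq : ℂ[X] × ℂ[X]} (hpq : pq ∈ interpolationPairs lam w)
    (h1 : ‖pq.1.eval 1‖ = ‖pq.2.eval 1‖) :
    pq.1 * conjReflect (Fintype.card ι) pq.1 = pq.2 * conjReflect (Fintype.card ι) pq.2 := by
  obtain ⟨c, hc⟩ := exists_mul_conjReflect_sub_eq_smul_nodal_mul hlam hinj hpq
  have hc1 := congrArg (eval 1) hc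
  have hD : (nodal univ lam).eval 1 ≠ 0 := eval_nodal_not_at_node fun i _ h => by
    simpa [← h] using hlam i
  simp only [eval_sub, eval_mul, eval_smul, eval_conjReflect_of_norm_eq_one hpq.1 norm_one,
    eval_conjReflect_of_norm_eq_one hpq.2.1 norm_one, one_pow, one_mul, Complex.mul_conj', h1,
    sub_self, smul_eq_mul] at hc1
  have hc0 : c = 0 := (mul_eq_zero.1 hc1.symm).resolve_right
    (mul_ne_zero hD (eval_conjReflect_nodal_ne_zero hlam norm_one.le))
  rwa [hc0, zero_smul, sub_eq_zero] at hc

lemma eval_snd_ne_zero_or_eval_snd_ne_zero (hlam : ∀ i, lam i ∈ ball (0 : ℂ) 1)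
    (hinj : Function.Injective lam) {pq rs : ℂ[X] × ℂ[X]} (hpq : pq ∈ interpolationPairs lam w)
    (hrs : rs ∈ interpolationPairs lam w) (h : pq.1 * rs.2 - rs.1 * pq.2 ≠ 0) (i : ι) :
    pq.2.eval (lam i) ≠ 0 ∨ rs.2.eval (lam i) ≠ 0 := by
  classical
  by_contra! hzero
  obtain ⟨c, hc⟩ := exists_mul_sub_mul_eq_smul_nodal_mul hlam hinj hpq hrs
  have hp : pq.1.eval (lam i) = 0 := by rw [(hpq.2.2 i).1, hzero.1, mul_zero]
  have hr : rs.1.eval (lam i) = 0 := by rw [(hrs.2.2 i).1, hzero.2, mul_zero]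
  have hderiv := congrArg (fun r => (derivative r).eval (lam i)) hc
  simp only [derivative_sub, derivative_mul, derivative_smul, eval_sub, eval_add, eval_mul,
    eval_smul, hp, hr, hzero.1, hzero.2, eval_nodal_at_node (mem_univ i),
    eval_nodal_derivative_eval_node_eq (mem_univ i), smul_eq_mul, mul_zero, zero_mul, add_zero,
    sub_zero] at hderiv
  have hD : (nodal (univ.erase i) lam).eval (lam i) ≠ 0 :=
    eval_nodal_not_at_node fun j hj => hinj.ne (ne_of_mem_erase hj).symm
  have hc0 : c = 0 := (mul_eq_zero.1 hderiv.symm).resolve_right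
    (mul_ne_zero hD (eval_conjReflect_nodal_ne_zero hlam (mem_ball_zero_iff.1 (hlam i)).le))
  exact h (by rw [hc, hc0, zero_smul])

end InterpolationPairs

lemma infinite_sphere {E : Type*} [NormedAddCommGroup E] [NormedSpace ℝ E]
    (h : 1 < Module.rank ℝ E) (x : E) {r : ℝ} (hr : 0 < r) : (sphere x r).Infinite := by
  have : Nontrivial E := (rank_pos_iff_nontrivial (R := ℝ)).1 (zero_lt_one.trans h)
  obtain ⟨v, hv⟩ := NormedSpace.sphere_nonempty (x := (0 : E)) |>.2 hr.le
  refine (isPreconnected_sphere h x r).infinite_of_nontrivial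
    ⟨x + v, by simp [mem_sphere_zero_iff_norm.1 hv], x - v,
      by simp [mem_sphere_zero_iff_norm.1 hv], ?_⟩
  rw [sub_eq_add_neg, Ne, add_right_inj]
  exact fun h => ne_neg_of_mem_sphere ℝ hr.ne' ⟨v, hv⟩ (Subtype.ext h)

section CauchyNumerator

variable {ι : Type*} [Fintype ι] [DecidableEq ι]

/-- The numerator of `a + (z - 1) ∑ j, α j / (1 - conj (lam j) * z)` over the common denominator
`∏ j, (1 - conj (lam j) * z)`; the factor `z - 1` makes `a` control the value at `1`. -/
noncomputable def cauchyNumerator (lam : ι → ℂ) (a : ℂ) (α : ι → ℂ) : ℂ[X] :=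
  a • conjReflect (Fintype.card ι) (nodal univ lam) +
    ∑ j, α j • ((X - C 1) * conjReflect #(univ.erase j) (nodal (univ.erase j) lam))

variable {lam w : ι → ℂ}

lemma card_eq_one_add_card_erase (j : ι) : Fintype.card ι = 1 + #(univ.erase j) := by
  rw [add_comm, card_erase_add_one (mem_univ j), card_univ]

lemma natDegree_cauchyNumerator_le (a : ℂ) (α : ι → ℂ) :
    (cauchyNumerator lam a α).natDegree ≤ Fintype.card ι := by
  refine (natDegree_add_le _ _).trans (max_le
    ((natDegree_smul_le _ _).trans (natDegree_conjReflect_le natDegree_nodal.le))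
    (natDegree_sum_le_of_forall_le _ _ fun j _ => (natDegree_smul_le _ _).trans ?_))
  rw [card_eq_one_add_card_erase j]
  exact natDegree_mul_le_of_le (natDegree_X_sub_C_le 1)
    (natDegree_conjReflect_le natDegree_nodal.le)

lemma conjReflect_cauchyNumerator (a : ℂ) (α : ι → ℂ) :
    conjReflect (Fintype.card ι) (cauchyNumerator lam a α) =
      conj a • nodal univ lam + ∑ j, conj (α j) • ((1 - X) * nodal (univ.erase j) lam) := by
  rw [cauchyNumerator, map_add, map_sum, map_smulₛₗ, conjReflect_involutive]
  congr 1
  refine sum_congr rfl fun j _ => ?_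
  rw [map_smulₛₗ, card_eq_one_add_card_erase j, conjReflect_mul (natDegree_X_sub_C_le 1)
    (natDegree_conjReflect_le natDegree_nodal.le), conjReflect_one_X_sub_C, conjReflect_involutive,
    map_one, C_1, one_mul]

lemma eval_conjReflect_cauchyNumerator (a : ℂ) (α : ι → ℂ) (i : ι) :
    (conjReflect (Fintype.card ι) (cauchyNumerator lam a α)).eval (lam i) =
      conj (α i) * ((1 - lam i) * (nodal (univ.erase i) lam).eval (lam i)) := by
  rw [conjReflect_cauchyNumerator, eval_add, eval_smul, eval_nodal_at_node (mem_univ i), smul_zero,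
    zero_add, eval_finsetSum, sum_eq_single i _ (by simp)]
  · simp
  · intro j _ hj
    simp [eval_nodal_at_node (mem_erase.2 ⟨hj.symm, mem_univ i⟩)]

lemma eval_cauchyNumerator (hlam : ∀ i, lam i ∈ ball (0 : ℂ) 1) (a : ℂ) (α : ι → ℂ) {z : ℂ}
    (hz : ‖z‖ ≤ 1) :
    (cauchyNumerator lam a α).eval z =
      (conjReflect (Fintype.card ι) (nodal univ lam)).eval z *
        (a - (1 - z) * ∑ j, α j / (1 - z * conj (lam j))) := by
  rw [cauchyNumerator, eval_add, eval_smul, eval_finsetSum, mul_sub, smul_eq_mul, mul_comm a,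
    mul_sum, mul_sum, sub_eq_add_neg _ (∑ _, _), ← sum_neg_distrib]
  congr 1
  refine sum_congr rfl fun j _ => ?_
  have hden : 1 - z * conj (lam j) ≠ 0 :=
    one_sub_mul_ne_zero hz (by rw [Complex.norm_conj]; exact mem_ball_zero_iff.1 (hlam j))
  rw [eval_smul, eval_mul, eval_conjReflect_nodal, Fintype.card, eval_conjReflect_nodal,
    ← mul_prod_erase _ _ (mem_univ j), mul_comm (conj (lam j))]
  simp only [eval_sub, eval_X, eval_C, smul_eq_mul]
  field_simp
  ring

lemma cauchyNumerator_mem_interpolationPairs (hlam : ∀ i, lam i ∈ ball (0 : ℂ) 1) {a b : ℂ}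
    {α : ι → ℂ} (h : ∀ i, (1 - lam i) * (pickMatrix lam w *ᵥ α) i = a - w i * b) :
    (cauchyNumerator lam a α, cauchyNumerator lam b fun j => conj (w j) * α j) ∈
      interpolationPairs lam w := by
  refine ⟨natDegree_cauchyNumerator_le _ _, natDegree_cauchyNumerator_le _ _, fun i => ⟨?_, ?_⟩⟩
  · have hsum : (pickMatrix lam w *ᵥ α) i = ∑ j, α j / (1 - lam i * conj (lam j)) -
        w i * ∑ j, conj (w j) * α j / (1 - lam i * conj (lam j)) := by
      rw [mulVec, dotProduct, mul_sum, ← sum_sub_distrib]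
      refine sum_congr rfl fun j _ => ?_
      rw [pickMatrix, of_apply]
      ring
    have hi := (mem_ball_zero_iff.1 (hlam i)).le
    have hpick := h i
    rw [hsum] at hpick
    rw [eval_cauchyNumerator hlam _ _ hi, eval_cauchyNumerator hlam _ _ hi]
    linear_combination -(conjReflect (Fintype.card ι) (nodal univ lam)).eval (lam i) * hpick
  · rw [eval_conjReflect_cauchyNumerator, eval_conjReflect_cauchyNumerator, map_mul,
      Complex.conj_conj, mul_assoc]

lemma exists_mem_interpolationPairs_eval_one_eq (hlam : ∀ i, lam i ∈ ball (0 : ℂ) 1)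
    (hdet : IsUnit (pickMatrix lam w).det) (a b : ℂ) :
    ∃ pq ∈ interpolationPairs lam w, pq.1.eval 1 = a ∧ pq.2.eval 1 = b := by
  obtain ⟨α, hα⟩ := (mulVec_surjective_iff_isUnit.2 ((isUnit_iff_isUnit_det _).2 hdet))
    fun i => (a - w i * b) / (1 - lam i)
  have hlam1 : ∀ i, 1 - lam i ≠ 0 := fun i => by
    simpa using one_sub_mul_ne_zero norm_one.le (mem_ball_zero_iff.1 (hlam i))
  have hmem := cauchyNumerator_mem_interpolationPairs hlam (a := a) (b := b) fun i => by
    rw [hα, mul_div_cancel₀ _ (hlam1 i)]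
  have hD := eval_conjReflect_nodal_ne_zero hlam norm_one.le
  refine ⟨_, Submodule.smul_mem _ ((conjReflect (Fintype.card ι) (nodal univ lam)).eval 1)⁻¹ hmem,
    ?_, ?_⟩ <;>
    simp [eval_cauchyNumerator hlam _ _ norm_one.le, hD]

lemma exists_isBlaschkeProduct_div_eq (hlam : ∀ i, lam i ∈ ball (0 : ℂ) 1)
    (hinj : Function.Injective lam) (hdet : IsUnit (pickMatrix lam w).det) :
    ∃ (m l : ℕ) (f g : ℂ → ℂ), m + l ≤ Fintype.card ι ∧ IsBlaschkeProduct m f ∧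
      IsBlaschkeProduct l g ∧ ∀ i, g (lam i) ≠ 0 ∧ f (lam i) / g (lam i) = w i := by
  obtain ⟨pq, hpq, hp1, hq1⟩ := exists_mem_interpolationPairs_eval_one_eq hlam hdet 1 0
  obtain ⟨rs, hrs, hr1, hs1⟩ := exists_mem_interpolationPairs_eval_one_eq hlam hdet 0 1
  have hwronskian : pq.1 * rs.2 - rs.1 * pq.2 ≠ 0 := fun h => by
    simpa [hp1, hq1, hr1, hs1] using congrArg (eval 1) h
  obtain ⟨u, hu, hu_bad⟩ := ((infinite_sphere (by simp) (0 : ℂ) one_pos).sdiff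
    (Set.finite_range fun i => -rs.2.eval (lam i) / pq.2.eval (lam i))).nonempty
  rw [mem_sphere_zero_iff_norm] at hu
  have hu0 : u ≠ 0 := norm_ne_zero_iff.1 (hu ▸ one_ne_zero)
  have hmem := add_mem (Submodule.smul_mem _ u hpq) hrs
  set fg := u • pq + rs
  have hfg1 : fg.1.eval 1 = u := by simp [fg, hp1, hr1]
  have hfg2 : fg.2.eval 1 = 1 := by simp [fg, hq1, hs1]
  have hne : ∀ i, fg.2.eval (lam i) ≠ 0 := fun i h => by
    rw [Prod.snd_add, Prod.smul_snd, eval_add, eval_smul, smul_eq_mul] at h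
    have hqi : pq.2.eval (lam i) ≠ 0 := fun hq =>
      (eval_snd_ne_zero_or_eval_snd_ne_zero hlam hinj hpq hrs hwronskian i).elim (· hq)
        fun hs => hs (by simpa [hq] using h)
    exact hu_bad ⟨i, by rw [div_eq_iff hqi]; linear_combination -h⟩
  obtain ⟨m, l, f, g, hml, hf, hg, hfg⟩ := exists_isBlaschkeProduct_div_eq_div
    (fun h => hu0 (by simpa [h] using hfg1.symm)) (fun h => by simp [h] at hfg2) hmem.1 hmem.2.1
    (mul_conjReflect_eq_of_norm_eval_one_eq hlam hinj hmem (by rw [hfg1, hfg2, hu, norm_one]))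
  refine ⟨m, l, f, g, hml, hf, hg, fun i => ?_⟩
  have hval := hfg _ (hlam i) (hne i)
  rwa [(hmem.2.2 i).1, mul_div_cancel_right₀ _ (hne i)] at hval

end CauchyNumerator

/-! ### The Pick kernel of a Blaschke product -/

/-- The Pick kernel `(1 - f z * conj (f y)) / (1 - z * conj y)` on the unit disk is a sum of `n`
positive kernels of rank one. The denominator is multiplied out. -/
def HasPickKernelDecomposition (n : ℕ) (f : ℂ → ℂ) : Prop :=
  ∃ E : Fin n → ℂ → ℂ, ∀ z ∈ ball (0 : ℂ) 1, ∀ y ∈ ball (0 : ℂ) 1,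
    1 - f z * conj (f y) = (1 - z * conj y) * ∑ k, E k z * conj (E k y)

lemma hasPickKernelDecomposition_const {c : ℂ} (hc : ‖c‖ = 1) :
    HasPickKernelDecomposition 0 fun _ => c :=
  ⟨Fin.elim0, fun _ _ _ _ => by simp [Complex.mul_conj', hc]⟩

lemma HasPickKernelDecomposition.mul {m n : ℕ} {f g : ℂ → ℂ}
    (hf : HasPickKernelDecomposition m f) (hg : HasPickKernelDecomposition n g) :
    HasPickKernelDecomposition (m + n) fun z => f z * g z := by
  obtain ⟨E, hE⟩ := hf
  obtain ⟨F, hF⟩ := hg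
  refine ⟨Fin.append E fun k z => f z * F k z, fun z hz y hy => ?_⟩
  have hsum : ∑ k, f z * F k z * (conj (f y) * conj (F k y)) =
      f z * conj (f y) * ∑ k, F k z * conj (F k y) := by
    rw [mul_sum]
    exact sum_congr rfl fun k _ => mul_mul_mul_comm _ _ _ _
  simp only [Fin.sum_univ_add, Fin.append_left, Fin.append_right, hsum, map_mul]
  linear_combination hE z hz y hy + f z * conj (f y) * hF z hz y hy

lemma hasPickKernelDecomposition_blaschkeFactor {a : ℂ} (ha : a ∈ ball (0 : ℂ) 1) :
    HasPickKernelDecomposition 1 fun z => (z - a) / (1 - conj a * z) := by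
  have ha1 := mem_ball_zero_iff.1 ha
  obtain ⟨t, ht⟩ : ∃ t : ℝ, (t : ℂ) * t = 1 - a * conj a :=
    ⟨√(1 - ‖a‖ ^ 2), by
      rw [← Complex.ofReal_mul, Real.mul_self_sqrt (by nlinarith [norm_nonneg a]),
        Complex.mul_conj']
      norm_cast⟩
  refine ⟨fun _ z => t / (1 - conj a * z), fun z hz y hy => ?_⟩
  have hden_z : 1 - conj a * z ≠ 0 :=
    one_sub_mul_ne_zero ((Complex.norm_conj a).trans_le ha1.le) (mem_ball_zero_iff.1 hz)
  have hden_y : 1 - a * conj y ≠ 0 :=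
    one_sub_mul_ne_zero ha1.le ((Complex.norm_conj y).trans_lt (mem_ball_zero_iff.1 hy))
  simp only [map_div₀, map_sub, map_mul, map_one, Complex.conj_conj, Complex.conj_ofReal,
    univ_unique, sum_const, card_singleton, one_smul, div_mul_div_comm]
  rw [mul_div_assoc', eq_div_iff (mul_ne_zero hden_z hden_y), sub_mul, one_mul,
    div_mul_cancel₀ _ (mul_ne_zero hden_z hden_y)]
  linear_combination (z * conj y - 1) * ht

lemma hasPickKernelDecomposition_prod {n : ℕ} {f : Fin n → ℂ → ℂ}
    (hf : ∀ k, HasPickKernelDecomposition 1 (f k)) :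
    HasPickKernelDecomposition n fun z => ∏ k, f k z := by
  induction n with
  | zero => simpa using hasPickKernelDecomposition_const norm_one
  | succ n ih =>
    simp only [Fin.prod_univ_castSucc]
    exact (ih fun k => hf k.castSucc).mul (hf (Fin.last n))

lemma IsBlaschkeProduct.hasPickKernelDecomposition {n : ℕ} {f : ℂ → ℂ}
    (hf : IsBlaschkeProduct n f) : HasPickKernelDecomposition n f := by
  obtain ⟨c, a, hc, ha, rfl⟩ := hf
  rw [show blaschkeProd c a = fun z => (∏ k, (z - a k) / (1 - conj (a k) * z)) * c from
    funext fun z => mul_comm _ _]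
  exact (hasPickKernelDecomposition_prod
    fun k => hasPickKernelDecomposition_blaschkeFactor (ha k)).mul
      (hasPickKernelDecomposition_const hc)

lemma exists_pickMatrix_eq_sub {ι : Type*} {lam w : ι → ℂ} (hlam : ∀ i, lam i ∈ ball (0 : ℂ) 1)
    {m l : ℕ} {f g : ℂ → ℂ} (hf : HasPickKernelDecomposition m f)
    (hg : HasPickKernelDecomposition l g)
    (hfg : ∀ i, g (lam i) ≠ 0 ∧ f (lam i) / g (lam i) = w i) :
    ∃ (U : Matrix ι (Fin m) ℂ) (V : Matrix ι (Fin l) ℂ),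
      pickMatrix lam w = U * Uᴴ - V * Vᴴ := by
  obtain ⟨E, hE⟩ := hf
  obtain ⟨F, hF⟩ := hg
  refine ⟨of fun i k => E k (lam i) / g (lam i), of fun i k => F k (lam i) / g (lam i), ?_⟩
  ext i j
  have hgi := (hfg i).1
  have hgj : conj (g (lam j)) ≠ 0 := (_root_.map_ne_zero _).2 (hfg j).1
  have hden : 1 - lam i * conj (lam j) ≠ 0 :=
    one_sub_mul_ne_zero (mem_ball_zero_iff.1 (hlam i)).le
      ((Complex.norm_conj _).trans_lt (mem_ball_zero_iff.1 (hlam j)))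
  have hE_ij := hE _ (hlam i) _ (hlam j)
  have hF_ij := hF _ (hlam i) _ (hlam j)
  simp only [pickMatrix, Matrix.sub_apply, mul_apply, conjTranspose_apply, of_apply, ← (hfg _).2,
    RCLike.star_def, map_div₀, div_mul_div_comm, ← sum_div]
  field_simp
  linear_combination hE_ij - hF_ij

/-! ### Inertia of a difference of positive semidefinite matrices -/

section Inertia

lemma exists_mulVec_eq_zero_of_card_lt {K ι κ : Type*} [Field K] [Fintype ι] [Fintype κ]
    (M : Matrix κ ι K) (s : Finset ι) (hs : Fintype.card κ < #s) :
    ∃ t ≠ 0, M *ᵥ t = 0 ∧ ∀ i ∉ s, t i = 0 := by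
  classical
  let L : (ι → K) →ₗ[K] (κ → K) × ((sᶜ : Finset ι) → K) :=
    M.mulVecLin.prod (LinearMap.funLeft K K Subtype.val)
  have hker : LinearMap.ker L ≠ ⊥ := by
    refine LinearMap.ker_ne_bot_of_finrank_lt ?_
    have := card_add_card_compl s
    simp only [Module.finrank_prod, Module.finrank_fintype_fun_eq_card, Fintype.card_coe]
    lia
  obtain ⟨t, ht, ht0⟩ := Submodule.exists_mem_ne_zero_of_ne_bot hker
  have ⟨hM, hsupp⟩ := Prod.mk.inj ht
  exact ⟨t, ht0, hM, fun i hi => congrFun hsupp ⟨i, mem_compl.2 hi⟩⟩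

variable {𝕜 ι : Type*} [RCLike 𝕜] [Fintype ι] [DecidableEq ι] {A : Matrix ι ι 𝕜}

lemma re_dotProduct_mulVec_eigenvectorUnitary (hA : A.IsHermitian) (t : ι → 𝕜) :
    RCLike.re (star ((hA.eigenvectorUnitary : Matrix ι ι 𝕜) *ᵥ t) ⬝ᵥ
      A *ᵥ ((hA.eigenvectorUnitary : Matrix ι ι 𝕜) *ᵥ t)) =
      ∑ i, hA.eigenvalues i * ‖t i‖ ^ 2 := by
  have hdiag : (hA.eigenvectorUnitary : Matrix ι ι 𝕜)ᴴ * A *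
      (hA.eigenvectorUnitary : Matrix ι ι 𝕜) =
      diagonal (RCLike.ofReal ∘ hA.eigenvalues) := by
    simpa [Unitary.conjStarAlgAut_apply, star_eq_conjTranspose] using
      hA.conjStarAlgAut_star_eigenvectorUnitary
  rw [star_mulVec, dotProduct_mulVec, vecMul_vecMul, dotProduct_mulVec, vecMul_vecMul, hdiag,
    dotProduct, map_sum]
  refine sum_congr rfl fun i _ => ?_
  rw [vecMul_diagonal, Pi.star_apply, Function.comp_apply, mul_right_comm, RCLike.star_def,
    RCLike.conj_mul, mul_comm]
  norm_cast

lemma card_filter_pos_mul_eigenvalues_le {κ : Type*} [Fintype κ] (hA : A.IsHermitian)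
    (M : Matrix κ ι 𝕜) (σ : ℝ)
    (hM : ∀ x, M *ᵥ x = 0 → σ * RCLike.re (star x ⬝ᵥ A *ᵥ x) ≤ 0) :
    #{i | 0 < σ * hA.eigenvalues i} ≤ Fintype.card κ := by
  by_contra! hlt
  obtain ⟨t, ht0, hMt, ht⟩ := exists_mulVec_eq_zero_of_card_lt
    (M * (hA.eigenvectorUnitary : Matrix ι ι 𝕜)) _ hlt
  rw [← mulVec_mulVec] at hMt
  refine (hM _ hMt).not_gt ?_
  rw [re_dotProduct_mulVec_eigenvectorUnitary, mul_sum]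
  have hterm : ∀ i, t i ≠ 0 → 0 < σ * (hA.eigenvalues i * ‖t i‖ ^ 2) := fun i hi => by
    have : 0 < σ * hA.eigenvalues i := by
      by_contra h
      exact hi (ht i (by simpa using h))
    rw [← mul_assoc]
    positivity
  obtain ⟨i, hi⟩ := Function.ne_iff.1 ht0
  refine sum_pos' (fun j _ => ?_) ⟨i, mem_univ i, hterm i hi⟩
  rcases eq_or_ne (t j) 0 with hj | hj
  · simp [hj]
  · exact (hterm j hj).le

open scoped ComplexOrder in
lemma card_eigenvalues_le_of_eq_sub {κ κ' : Type*} [Fintype κ] [Fintype κ'] (hA : A.IsHermitian)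
    {U : Matrix ι κ 𝕜} {V : Matrix ι κ' 𝕜} (h : A = U * Uᴴ - V * Vᴴ) :
    #{i | 0 < hA.eigenvalues i} ≤ Fintype.card κ ∧
      #{i | hA.eigenvalues i < 0} ≤ Fintype.card κ' := by
  have hform : ∀ x, star x ⬝ᵥ A *ᵥ x = star x ⬝ᵥ (U * Uᴴ) *ᵥ x - star x ⬝ᵥ (V * Vᴴ) *ᵥ x :=
    fun x => by rw [h, sub_mulVec, dotProduct_sub]
  constructor
  · refine (card_le_card ?_).trans (card_filter_pos_mul_eigenvalues_le hA Uᴴ 1 fun x hx => ?_)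
    · simp
    · rw [hform, ← mulVec_mulVec, hx]
      simpa using (posSemidef_self_mul_conjTranspose V).re_dotProduct_nonneg x
  · refine (card_le_card ?_).trans (card_filter_pos_mul_eigenvalues_le hA Vᴴ (-1) fun x hx => ?_)
    · simp
    · rw [hform, ← mulVec_mulVec x V, hx]
      simpa using (posSemidef_self_mul_conjTranspose U).re_dotProduct_nonneg x

lemma card_pos_eigenvalues_add_card_neg_eigenvalues (hA : A.IsHermitian) (hdet : IsUnit A.det) :
    #{i | 0 < hA.eigenvalues i} + #{i | hA.eigenvalues i < 0} = Fintype.card ι := by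
  have hne : ∀ i, hA.eigenvalues i ≠ 0 := fun i h => hdet.ne_zero <| by
    rw [hA.det_eq_prod_eigenvalues]
    exact prod_eq_zero (mem_univ i) (by simp [h])
  rw [← card_union_of_disjoint (disjoint_filter.2 fun _ _ h => h.not_gt), ← filter_or,
    filter_true_of_mem fun i _ => (hne i).symm.lt_or_gt, card_univ]

end Inertia

theorem takagi_theorem_general {ι : Type*} [Fintype ι] [DecidableEq ι] {lam w : ι → ℂ}
    (hlam : ∀ i, lam i ∈ ball (0 : ℂ) 1) (hinj : Function.Injective lam)
    (hdet : IsUnit (pickMatrix lam w).det) :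
    ∃ f g : ℂ → ℂ,
      IsBlaschkeProduct #{i | 0 < (isHermitian_pickMatrix lam w).eigenvalues i} f ∧
      IsBlaschkeProduct #{i | (isHermitian_pickMatrix lam w).eigenvalues i < 0} g ∧
      (∀ i, g (lam i) ≠ 0 ∧ f (lam i) / g (lam i) = w i) ∧
      ∀ z, ‖z‖ = 1 → ‖f z / g z‖ = 1 := by
  obtain ⟨m, l, f, g, hml, hf, hg, hfg⟩ := exists_isBlaschkeProduct_div_eq hlam hinj hdet
  obtain ⟨U, V, hUV⟩ := exists_pickMatrix_eq_sub hlam hf.hasPickKernelDecomposition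
    hg.hasPickKernelDecomposition hfg
  have hherm := isHermitian_pickMatrix lam w
  obtain ⟨hpos, hneg⟩ := card_eigenvalues_le_of_eq_sub hherm hUV
  have hcard := card_pos_eigenvalues_add_card_neg_eigenvalues hherm hdet
  rw [Fintype.card_fin] at hpos hneg
  obtain rfl : #{i | 0 < hherm.eigenvalues i} = m := by lia
  obtain rfl : #{i | hherm.eigenvalues i < 0} = l := by lia
  exact ⟨f, g, hf, hg, hfg, fun z hz => by
    rw [norm_div, hf.norm_eq_one hz, hg.norm_eq_one hz, div_one]⟩

/-- **Takagi's theorem.** If the Pick matrix of the data `(λᵢ, wᵢ)` is Hermitian and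
invertible, with `π` positive and `ν` negative eigenvalues, then there are Blaschke
products `f` of degree `π` and `g` of degree `ν` with `g(λᵢ) ≠ 0` and `f(λᵢ)/g(λᵢ) = wᵢ`
for all `i`; the quotient `f/g` is unimodular on the unit circle wherever defined. -/
theorem takagi_theorem {N : ℕ} (lam : Fin N → ℂ) (w : Fin N → ℂ)
    (hlam : ∀ i, lam i ∈ ball (0 : ℂ) 1) (hdist : Function.Injective lam)
    (piN nu : ℕ)
    (hherm : (Matrix.of fun i j : Fin N =>
      (1 - w i * starRingEnd ℂ (w j)) / (1 - lam i * starRingEnd ℂ (lam j))).IsHermitian)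
    (hinv : IsUnit ((Matrix.of fun i j : Fin N =>
      (1 - w i * starRingEnd ℂ (w j)) / (1 - lam i * starRingEnd ℂ (lam j))).det))
    (hpos : (Finset.univ.filter fun i => 0 < hherm.eigenvalues i).card = piN)
    (hneg : (Finset.univ.filter fun i => hherm.eigenvalues i < 0).card = nu) :
    ∃ (c₁ : ℂ) (a : Fin piN → ℂ) (c₂ : ℂ) (b : Fin nu → ℂ),
      ‖c₁‖ = 1 ∧ (∀ k, a k ∈ ball (0 : ℂ) 1) ∧
      ‖c₂‖ = 1 ∧ (∀ k, b k ∈ ball (0 : ℂ) 1) ∧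
      (∀ i, blaschkeProd c₂ b (lam i) ≠ 0 ∧
        blaschkeProd c₁ a (lam i) / blaschkeProd c₂ b (lam i) = w i) ∧
      (∀ z : ℂ, ‖z‖ = 1 → blaschkeProd c₂ b z ≠ 0 →
        ‖blaschkeProd c₁ a z / blaschkeProd c₂ b z‖ = 1) := by
  subst hpos hneg
  obtain ⟨_, _, ⟨c₁, a, hc₁, ha, rfl⟩, ⟨c₂, b, hc₂, hb, rfl⟩, hval, hnorm⟩ :=
    takagi_theorem_general hlam hdist hinv
  exact ⟨c₁, a, c₂, b, hc₁, ha, hc₂, hb, hval, fun z hz _ => hnorm z hz⟩
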